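/- For all integers b, c ≥ 0, the polynomial Q_{b,c} satisfies the q-difference equation E24: (w·y·z·q^{−2(b+2c)} − 1)·Q_{b,c}(x,y,z,w) + (1−w)·Q_{b,c}(x,y,z,q^{−2}w) − w·(z−1)·q^{−2b}·Q_{b,c}(x,q²y,q^{−4}z,w) − w·(y−1)·z·q^{−2(b+2c)}·Q_{b,c}(q⁴x,q^{−2}y,z,w) = 0. -/

import Mathlib

noncomputable section

open MvPolynomial

/-- The field `K = ℚ(q)` of rational functions in `q` over `ℚ`. -/
abbrev K : Type := RatFunc ℚ

/-- The variable `q ∈ K = ℚ(q)`. -/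
def q : K := RatFunc.X

/-- The polynomial ring `K[x,y,z,w]`. -/
abbrev P4 : Type := MvPolynomial (Fin 4) K

def xP : P4 := X 0
def yP : P4 := X 1
def zP : P4 := X 2
def wP : P4 := X 3

/-- The `K`-algebra map `K[x,y,z,w] → K[x,y,z,w]` rescaling the variables:
`x ↦ q^a·x`, `y ↦ q^b·y`, `z ↦ q^c·z`, `w ↦ q^d·w`. -/
def scl (a b c d : ℤ) : P4 →ₐ[K] P4 :=
  aeval ![C (q ^ a) * X 0, C (q ^ b) * X 1, C (q ^ c) * X 2, C (q ^ d) * X 3]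

/-- The polynomials `Q_{b,0}(x,y,z,w)`, defined by the recursion (rec1) of the paper. -/
def Qb0 : ℕ → P4
  | 0 => 1
  | b + 1 =>
      C (q ^ (4 * (b : ℤ))) * wP * yP * (zP - 1) * scl 0 0 (-4) 0 (Qb0 b)
    + C (q ^ (4 * (b : ℤ))) * wP * xP * (yP - 1) * yP * zP * scl 0 (-2) 0 0 (Qb0 b)
    + C (q ^ (6 * (b : ℤ))) * (wP - 1) * (yP - 1) * scl 0 (-2) 0 (-2) (Qb0 b)
    + C (q ^ (4 * (b : ℤ))) * wP * (xP - 1) * yP * (zP - 1) * scl (-4) 2 (-4) 0 (Qb0 b)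
    + C (q ^ (6 * (b : ℤ))) * (wP - 1) * (xP - 1) * yP * scl (-4) 0 0 (-2) (Qb0 b)

/-- The polynomials `Q_{b,c}(x,y,z,w)`: for `c ≥ 1` they are defined by the
recursion (rec2) of the paper, lowering `c`; for `c = 0` by `Qb0`. -/
def Q : ℕ → ℕ → P4
  | b, 0 => Qb0 b
  | b, c + 1 =>
      - (C (q ^ (4 * (b : ℤ) + 8 * (c : ℤ))) * wP ^ 2 * yP * (zP - 1) * zP)
          * scl 0 0 (-4) 0 (Q b c)
    + (C (q ^ (4 * (b : ℤ) + 4 * (c : ℤ) - 2)) * wP * xP * (yP - 1) * zP)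
          * (C (q ^ (2 * (b : ℤ) + 4 * (c : ℤ) + 4)) - C (q ^ (2 : ℤ)) * wP * yP * zP)
          * scl 0 (-2) 0 0 (Q b c)
    - (C (q ^ (6 * (b : ℤ) + 8 * (c : ℤ))) * (wP - 1) * wP * (yP - 1) * zP)
          * scl 0 (-2) 0 (-2) (Q b c)
    + (C (q ^ (4 * (b : ℤ) + 8 * (c : ℤ) - 2)) * wP * (xP - 1) * (zP - 1))
          * (C (q ^ (2 * (b : ℤ) + 4 * (c : ℤ) + 4)) - C (q ^ (2 : ℤ)) * wP * yP * zP)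
          * scl (-4) 2 (-4) 0 (Q b c)
    + (C (q ^ (6 * (b : ℤ) + 8 * (c : ℤ) - 2)) * (wP - 1) * (xP - 1))
          * (C (q ^ (2 * (b : ℤ) + 4 * (c : ℤ) + 4)) - C (q ^ (2 : ℤ)) * wP * yP * zP)
          * scl (-4) 0 0 (-2) (Q b c)

/-!
The two recursions are built from the same pieces `V = xFreeStep u` and `U = sharedStep u v`: the
recursion in `b` is `W = V + y U`, the one in `c` is `q² U - v w z W`. Moving `L u v = e24Op u v`
past `V`, `U`, or multiplication by `y` or `w z` changes only `u` and `v` by powers of `q`, up to an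
explicit error term. In the assembled operators these errors cancel, so each of them intertwines two
instances of `L` and carries a solution of one instance of E24 to a solution of the next. The
induction starts from the solution `1` of the case `u = v = 1`.
-/

lemma q_ne_zero : q ≠ 0 := RatFunc.X_ne_zero

lemma C_q_zpow_mul (m n : ℤ) : (C (q ^ m) * C (q ^ n) : P4) = C (q ^ (m + n)) := by
  rw [← C_mul, ← zpow_add₀ q_ne_zero]

lemma C_q_two_mul_C_q_neg_two : (C (q ^ (2 : ℤ)) * C (q ^ (-2 : ℤ)) : P4) = 1 := by
  rw [C_q_zpow_mul]
  simp

lemma C_q_four : (C (q ^ (4 : ℤ)) : P4) = C (q ^ (2 : ℤ)) ^ 2 := by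
  rw [sq, C_q_zpow_mul]
  norm_num only

lemma C_q_neg_four : (C (q ^ (-4 : ℤ)) : P4) = C (q ^ (-2 : ℤ)) ^ 2 := by
  rw [sq, C_q_zpow_mul]
  norm_num only

section Rescaling

variable (a b c d : ℤ)

lemma scl_xP : scl a b c d xP = C (q ^ a) * xP := by simp [scl, xP]

lemma scl_yP : scl a b c d yP = C (q ^ b) * yP := by simp [scl, yP]

lemma scl_zP : scl a b c d zP = C (q ^ c) * zP := by simp [scl, zP]

lemma scl_wP : scl a b c d wP = C (q ^ d) * wP := by simp [scl, wP]

lemma scl_C (k : K) : scl a b c d (C k) = C k := by simp [scl]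

lemma scl_scl (a' b' c' d' : ℤ) (F : P4) :
    scl a b c d (scl a' b' c' d' F) = scl (a + a') (b + b') (c + c') (d + d') F := by
  suffices h : (scl a b c d).comp (scl a' b' c' d') = scl (a + a') (b + b') (c + c') (d + d') from
    DFunLike.congr_fun h F
  apply MvPolynomial.algHom_ext
  intro i
  fin_cases i <;> simp [scl, zpow_add₀ q_ne_zero] <;> ring

/-- The one-term `q`-difference operator `F ↦ f · F(q^a x, q^b y, q^c z, q^d w)`, from
which the operators below are built. -/
def mulScl (f : P4) : P4 →ₗ[K] P4 :=
  LinearMap.mulLeft K f ∘ₗ (scl a b c d).toLinearMap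

lemma mulScl_apply (f F : P4) : mulScl a b c d f F = f * scl a b c d F := rfl

end Rescaling

section Operators

variable (u v : K)

/-- The `q`-difference operator of E24, with free parameters in place of the powers of `q`: the
equation for `Q_{b,c}` is the case `u = q^{-2b}`, `v = q^{-2(b+2c)}`. -/
def e24Op : P4 →ₗ[K] P4 :=
  LinearMap.mulLeft K (C v * wP * yP * zP - 1)
  + mulScl 0 0 0 (-2) (1 - wP)
  - mulScl 0 2 (-4) 0 (C u * wP * (zP - 1))
  - mulScl 4 (-2) 0 0 (C v * wP * (yP - 1) * zP)

/-- The part common to the recursions in `b` and in `c`: the terms whose coefficients involve `x`,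
stripped of the factor `y` that they carry in the recursion in `b`. -/
def sharedStep : P4 →ₗ[K] P4 :=
  mulScl 0 (-2) 0 0 (C v * wP * xP * (yP - 1) * zP)
  + mulScl (-4) 2 (-4) 0 (C u * wP * (xP - 1) * (zP - 1))
  + mulScl (-4) 0 0 (-2) ((wP - 1) * (xP - 1))

/-- The two terms of the recursion in `b` that do not involve `x`. -/
def xFreeStep : P4 →ₗ[K] P4 :=
  mulScl 0 0 (-4) 0 (C u * wP * yP * (zP - 1))
  + mulScl 0 (-2) 0 (-2) ((wP - 1) * (yP - 1))

/-- The operator of the recursion in `b`. Up to a power of `q`, the polynomial `Q_{b+1,0}` is its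
value at `Q_{b,0}` for `u = v = q^{-2b}`. -/
def bStep : P4 →ₗ[K] P4 :=
  xFreeStep u + LinearMap.mulLeft K yP ∘ₗ sharedStep u v

/-- The operator of the recursion in `c`. Up to a power of `q`, the polynomial `Q_{b,c+1}` is its
value at `Q_{b,c}` for `u = q^{-2b}` and `s = v = q^{-2(b+2c)}`. The weight `s` is kept separate
from `v` because commuting with `e24Op` rescales `s` alone. -/
def cStep (s : K) : P4 →ₗ[K] P4 :=
  q ^ (2 : ℤ) • sharedStep u v - LinearMap.mulLeft K (C s * wP * zP) ∘ₗ bStep u v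

variable (F : P4)

lemma e24Op_apply :
    e24Op u v F = (C v * wP * yP * zP - 1) * F
      + (1 - wP) * scl 0 0 0 (-2) F
      - C u * wP * (zP - 1) * scl 0 2 (-4) 0 F
      - C v * wP * (yP - 1) * zP * scl 4 (-2) 0 0 F := rfl

lemma sharedStep_apply :
    sharedStep u v F = C v * wP * xP * (yP - 1) * zP * scl 0 (-2) 0 0 F
      + C u * wP * (xP - 1) * (zP - 1) * scl (-4) 2 (-4) 0 F
      + (wP - 1) * (xP - 1) * scl (-4) 0 0 (-2) F := rfl

lemma xFreeStep_apply :
    xFreeStep u F = C u * wP * yP * (zP - 1) * scl 0 0 (-4) 0 F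
      + (wP - 1) * (yP - 1) * scl 0 (-2) 0 (-2) F := rfl

lemma bStep_apply : bStep u v F = xFreeStep u F + yP * sharedStep u v F := rfl

lemma cStep_apply (s : K) :
    cStep u v s F = C (q ^ (2 : ℤ)) * sharedStep u v F - C s * wP * zP * bStep u v F := by
  simp only [cStep, LinearMap.sub_apply, LinearMap.smul_apply, LinearMap.comp_apply,
    LinearMap.mulLeft_apply, smul_eq_C_mul]

lemma e24Op_wP_mul_zP_mul :
    e24Op u (q ^ (-4 : ℤ) * v) (wP * zP * F) =
      C (q ^ (-2 : ℤ)) * wP * zP * e24Op (q ^ (-2 : ℤ) * u) (q ^ (-2 : ℤ) * v) F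
        + C (q ^ (-2 : ℤ) - 1) * wP * zP * F := by
  simp only [e24Op_apply, map_mul, map_sub, map_one, scl_wP, scl_zP, zpow_zero, one_mul,
    C_q_neg_four]
  ring

lemma e24Op_yP_mul :
    e24Op (q ^ (-2 : ℤ) * u) (q ^ (-2 : ℤ) * v) (yP * F) =
      yP * e24Op u (q ^ (-4 : ℤ) * v) F
        + C (q ^ (-2 : ℤ) * (1 - q ^ (-2 : ℤ)) * v) * wP * yP * zP * (yP * F) := by
  simp only [e24Op_apply, map_mul, map_sub, map_one, scl_yP, C_q_neg_four, zpow_zero, one_mul]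
  linear_combination
    (-C u * yP * wP * (zP - 1) * scl 0 2 (-4) 0 F) * C_q_two_mul_C_q_neg_two

lemma e24Op_xFreeStep :
    e24Op (q ^ (-2 : ℤ) * u) (q ^ (-2 : ℤ) * v) (xFreeStep u F) =
      xFreeStep u (e24Op u v F)
        + C (q ^ (-2 : ℤ) * (1 - q ^ (-2 : ℤ)) * v) * wP * yP * zP * xFreeStep u F := by
  have hq := C_q_two_mul_C_q_neg_two
  simp only [e24Op_apply, xFreeStep_apply, map_add, map_mul, map_sub, map_one, scl_yP, scl_zP,
    scl_wP, scl_C, scl_scl, C_q_neg_four, zpow_zero, one_mul]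
  norm_num only
  grind

lemma e24Op_sharedStep :
    e24Op u (q ^ (-4 : ℤ) * v) (sharedStep u v F) =
      sharedStep u v (e24Op u v F)
        - C (q ^ (-2 : ℤ) * (1 - q ^ (-2 : ℤ)) * v) * wP * zP * bStep u v F := by
  have hq := C_q_two_mul_C_q_neg_two
  simp only [e24Op_apply, bStep_apply, xFreeStep_apply, sharedStep_apply, map_add, map_mul,
    map_sub, map_one, scl_xP, scl_yP, scl_zP, scl_wP, scl_C, scl_scl, C_q_four, C_q_neg_four,
    zpow_zero, one_mul]
  norm_num only
  grind

theorem e24Op_bStep :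
    e24Op (q ^ (-2 : ℤ) * u) (q ^ (-2 : ℤ) * v) (bStep u v F) = bStep u v (e24Op u v F) := by
  simp only [bStep_apply, map_add, e24Op_xFreeStep, e24Op_yP_mul, e24Op_sharedStep]
  ring

theorem e24Op_cStep :
    e24Op u (q ^ (-4 : ℤ) * v) (cStep u v v F) =
      cStep u v (q ^ (-2 : ℤ) * v) (e24Op u v F) := by
  have hwz : e24Op u (q ^ (-4 : ℤ) * v) (C v * wP * zP * bStep u v F) =
      C v * (C (q ^ (-2 : ℤ)) * wP * zP * bStep u v (e24Op u v F)
        + C (q ^ (-2 : ℤ) - 1) * wP * zP * bStep u v F) := by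
    rw [mul_assoc (C v), mul_assoc (C v), ← smul_eq_C_mul, map_smul, smul_eq_C_mul,
      e24Op_wP_mul_zP_mul, e24Op_bStep]
  rw [cStep_apply, cStep_apply, map_sub, ← smul_eq_C_mul, map_smul, smul_eq_C_mul,
    e24Op_sharedStep, hwz]
  simp only [map_mul, map_sub, map_one]
  linear_combination (-(1 - C (q ^ (-2 : ℤ))) * C v * wP * zP * bStep u v F)
    * C_q_two_mul_C_q_neg_two

end Operators

lemma Qb0_succ (b : ℕ) :
    Qb0 (b + 1) =
      q ^ (6 * (b : ℤ)) • bStep (q ^ (-2 * (b : ℤ))) (q ^ (-2 * (b : ℤ))) (Qb0 b) := by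
  have hu : (C (q ^ (4 * (b : ℤ))) : P4) = C (q ^ (6 * (b : ℤ))) * C (q ^ (-2 * (b : ℤ))) := by
    rw [C_q_zpow_mul]
    ring_nf
  rw [Qb0, bStep_apply, xFreeStep_apply, sharedStep_apply, smul_eq_C_mul, hu]
  ring

lemma Q_succ (b c : ℕ) :
    Q b (c + 1) =
      q ^ (8 * (b : ℤ) + 12 * (c : ℤ)) • cStep (q ^ (-2 * (b : ℤ)))
        (q ^ (-2 * ((b : ℤ) + 2 * (c : ℤ)))) (q ^ (-2 * ((b : ℤ) + 2 * (c : ℤ)))) (Q b c) := by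
  set e : P4 := C (q ^ (8 * (b : ℤ) + 12 * (c : ℤ))) with he
  set u : P4 := C (q ^ (-2 * (b : ℤ))) with hu
  set v : P4 := C (q ^ (-2 * ((b : ℤ) + 2 * (c : ℤ)))) with hv
  set r : P4 := C (q ^ (-2 : ℤ)) with hr
  have hevu : C (q ^ (4 * (b : ℤ) + 8 * (c : ℤ))) = e * v * u := by
    simp only [he, hu, hv, C_q_zpow_mul]
    ring_nf
  have hev : C (q ^ (6 * (b : ℤ) + 8 * (c : ℤ))) = e * v := by
    simp only [he, hv, C_q_zpow_mul]
    ring_nf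
  have hevvr : C (q ^ (4 * (b : ℤ) + 4 * (c : ℤ) - 2)) = e * v * v * r := by
    simp only [he, hv, hr, C_q_zpow_mul]
    ring_nf
  have hevur : C (q ^ (4 * (b : ℤ) + 8 * (c : ℤ) - 2)) = e * v * u * r := by
    simp only [he, hu, hv, hr, C_q_zpow_mul]
    ring_nf
  have hevr : C (q ^ (6 * (b : ℤ) + 8 * (c : ℤ) - 2)) = e * v * r := by
    simp only [he, hv, hr, C_q_zpow_mul]
    ring_nf
  have hfactor : v * r *
      (C (q ^ (2 * (b : ℤ) + 4 * (c : ℤ) + 4)) - C (q ^ (2 : ℤ)) * wP * yP * zP) =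
        C (q ^ (2 : ℤ)) - v * wP * yP * zP := by
    have hvr : v * r * C (q ^ (2 * (b : ℤ) + 4 * (c : ℤ) + 4)) = C (q ^ (2 : ℤ)) := by
      simp only [hv, hr, C_q_zpow_mul]
      ring_nf
    linear_combination hvr - v * wP * yP * zP * C_q_two_mul_C_q_neg_two
  rw [Q, cStep_apply, bStep_apply, xFreeStep_apply, smul_eq_C_mul, hevu, hev, hevvr, hevur, hevr,
    ← he, ← hu, ← hv]
  linear_combination (norm := (rw [sharedStep_apply]; ring))
    e * sharedStep (q ^ (-2 * (b : ℤ))) (q ^ (-2 * ((b : ℤ) + 2 * (c : ℤ)))) (Q b c) * hfactor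

lemma e24Op_Qb0 (b : ℕ) : e24Op (q ^ (-2 * (b : ℤ))) (q ^ (-2 * (b : ℤ))) (Qb0 b) = 0 := by
  induction b with
  | zero =>
    simp only [Qb0, e24Op_apply, Nat.cast_zero, mul_zero, zpow_zero, map_one]
    ring
  | succ b ih =>
    have hu : q ^ (-2 * ((b + 1 : ℕ) : ℤ)) = q ^ (-2 : ℤ) * q ^ (-2 * (b : ℤ)) := by
      rw [← zpow_add₀ q_ne_zero]
      push_cast
      ring_nf
    rw [Qb0_succ, map_smul, hu, e24Op_bStep, ih, map_zero, smul_zero]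

lemma e24Op_Q (b c : ℕ) :
    e24Op (q ^ (-2 * (b : ℤ))) (q ^ (-2 * ((b : ℤ) + 2 * (c : ℤ)))) (Q b c) = 0 := by
  induction c with
  | zero => simpa [Q] using e24Op_Qb0 b
  | succ c ih =>
    have hv : q ^ (-2 * ((b : ℤ) + 2 * ((c + 1 : ℕ) : ℤ))) =
        q ^ (-4 : ℤ) * q ^ (-2 * ((b : ℤ) + 2 * (c : ℤ))) := by
      rw [← zpow_add₀ q_ne_zero]
      push_cast
      ring_nf
    rw [Q_succ, map_smul, hv, e24Op_cStep, ih, map_zero, smul_zero]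

/-- the q-difference equation E24 for `Q_{b,c}`. -/
theorem Q_E24 (b c : ℕ) :
    (C (q ^ (-2 * ((b : ℤ) + 2 * (c : ℤ)))) * wP * yP * zP - 1) * Q b c
    + (1 - wP) * scl 0 0 0 (-2) (Q b c)
    - C (q ^ (-2 * (b : ℤ))) * wP * (zP - 1) * scl 0 2 (-4) 0 (Q b c)
    - C (q ^ (-2 * ((b : ℤ) + 2 * (c : ℤ)))) * wP * (yP - 1) * zP
        * scl 4 (-2) 0 0 (Q b c) = 0 := by
  simpa only [e24Op_apply] using e24Op_Q b c
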